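/- Fix n ≥ 1 and let Δ : (Fin n → ℝ≥0) → ℝ be a function such that whenever p, q : Fin n → ℝ≥0 satisfy p ≽₀,₁ q, then Δ(p) ≤ Δ(q). Suppose there is a continuous function Λ : (Fin n → ℝ≥0) → ℝ such that Δ(p) = Λ(p) for every p all of whose entries are rational. Then Δ(p) = Λ(p) for every p : Fin n → ℝ≥0 with Σ_i p_i ∈ ℚ. -/

import Mathlib

open scoped BigOperators NNReal

noncomputable section

/-- A probability vector on a finite index type. -/
def IsProbVec {ι : Type*} [Fintype ι] (p : ι → ℝ) : Prop :=
  (∀ i, 0 ≤ p i) ∧ ∑ i, p i = 1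

/-- A (column-)stochastic matrix: nonnegative entries, every column sums to `1`. -/
def IsStochastic {ι κ : Type*} [Fintype ι] [Fintype κ] (T : ι → κ → ℝ) : Prop :=
  (∀ i j, 0 ≤ T i j) ∧ ∀ j, ∑ i, T i j = 1

/-- Matrix–vector multiplication. -/
def matVec {ι κ : Type*} [Fintype κ] (T : ι → κ → ℝ) (v : κ → ℝ) : ι → ℝ :=
  fun i => ∑ j, T i j * v j

/-- Kronecker product of two vectors. -/
def kron {ι κ : Type*} (p : ι → ℝ) (q : κ → ℝ) : ι × κ → ℝ :=
  fun x => p x.1 * q x.2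

/-- `n`-fold Kronecker power of a vector. -/
def kpow {ι : Type*} (p : ι → ℝ) (n : ℕ) : (Fin n → ι) → ℝ :=
  fun f => ∏ j, p (f j)

/-- Kronecker product reindexed along `Fin (m * n)`. -/
def kronFin {m n : ℕ} (p : Fin m → ℝ) (q : Fin n → ℝ) : Fin (m * n) → ℝ :=
  fun i => kron p q (finProdFinEquiv.symm i)

/-- The sum of the `k` largest entries of a nonnegative vector, expressed as the
largest sum over subsets of cardinality at most `k`. -/
def topSum {ι : Type*} [Fintype ι] (p : ι → ℝ) (k : ℕ) : ℝ :=
  ⨆ s ∈ {s : Finset ι | s.card ≤ k}, ∑ i ∈ s, p i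

/-- Majorization for nonnegative vectors (possibly of different lengths):
equal total sums, and for each `k` the sum of the `k` largest entries of `p` is
at least that of `q`. -/
def Majorizes {ι κ : Type*} [Fintype ι] [Fintype κ] (p : ι → ℝ) (q : κ → ℝ) : Prop :=
  (∑ i, p i = ∑ j, q j) ∧ ∀ k : ℕ, topSum q k ≤ topSum p k

/-- The size of the support, `‖p‖₀`. -/
def supp0 {ι : Type*} [Fintype ι] (p : ι → ℝ) : ℕ :=
  (Finset.univ.filter fun i => p i ≠ 0).card

/-- Entrywise nonnegativity. -/
def NonnegVec {n : ℕ} (p : Fin n → ℝ) : Prop := ∀ i, 0 ≤ p i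

/-- The modified majorization preorder `≽₀,₁`: majorization plus equality of
support sizes. -/
def MajMod {ι κ : Type*} [Fintype ι] [Fintype κ] (p : ι → ℝ) (q : κ → ℝ) : Prop :=
  Majorizes p q ∧ supp0 p = supp0 q

/-- `f_α(p) = ∑_{i ∈ supp p} (p i)^α`. -/
def fA {ι : Type*} [Fintype ι] (α : ℝ) (p : ι → ℝ) : ℝ :=
  ∑ i, if p i = 0 then 0 else p i ^ α

/-- Shannon entropy (the terms with `p i = 0` vanish). -/
def H1ent {ι : Type*} [Fintype ι] (p : ι → ℝ) : ℝ := -∑ i, p i * Real.log (p i)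

/-- `H₀'(p) = ∑_{i ∈ supp p} log p_i`. -/
def H0' {ι : Type*} [Fintype ι] (p : ι → ℝ) : ℝ :=
  ∑ i, if p i = 0 then 0 else Real.log (p i)

/-- Rényi entropy of order `α` (with `α = 1` the Shannon entropy). -/
def Hent {ι : Type*} [Fintype ι] (α : ℝ) (p : ι → ℝ) : ℝ :=
  if α = 1 then -∑ i, p i * Real.log (p i)
  else (1 / (1 - α)) * Real.log (∑ i, if p i = 0 then 0 else p i ^ α)

/-- Min-entropy `H_∞(p) = - log max_i p_i`. -/
def HentInf {ι : Type*} [Fintype ι] (p : ι → ℝ) : ℝ := -Real.log (⨆ i, p i)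

/-- Kullback–Leibler divergence (the terms with `p i = 0` vanish). -/
def KL {n : ℕ} (p q : Fin n → ℝ) : ℝ :=
  ∑ i, p i * Real.log (p i / q i)

/-- Rényi divergence of order `α` for vectors with common support. -/
def Renyi {n : ℕ} (α : ℝ) (p q : Fin n → ℝ) : ℝ :=
  if α = 1 then ∑ i, p i * Real.log (p i / q i)
  else (1 / (α - 1)) * Real.log (∑ i, if p i = 0 then 0 else p i ^ α * q i ^ (1 - α))

/-- Max-divergence `D_∞(p‖q) = max_{i ∈ supp q} log (p_i / q_i)`. -/
def RenyiInf {n : ℕ} (p q : Fin n → ℝ) : ℝ :=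
  ⨆ i ∈ Finset.univ.filter (fun i => q i ≠ 0), Real.log (p i / q i)

/-- Rényi divergence with values in the extended reals `[0, ∞]`. -/
def RenyiE {n : ℕ} (α : ℝ) (p q : Fin n → ℝ) : EReal :=
  if α = 1 then
    (if ∀ i, p i ≠ 0 → q i ≠ 0 then ((∑ i, p i * Real.log (p i / q i) : ℝ) : EReal) else ⊤)
  else if α < 1 then
    (if ∃ i, p i ≠ 0 ∧ q i ≠ 0 then
      (((1 / (α - 1)) *
        Real.log (∑ i, if p i = 0 ∨ q i = 0 then 0 else p i ^ α * q i ^ (1 - α)) : ℝ) : EReal)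
    else (⊤ : EReal))
  else
    (if ∀ i, p i ≠ 0 → q i ≠ 0 then
      (((1 / (α - 1)) *
        Real.log (∑ i, if p i = 0 then 0 else p i ^ α * q i ^ (1 - α)) : ℝ) : EReal)
    else (⊤ : EReal))

/-- The common support of a tuple of vectors. -/
def suppIdx {d n : ℕ} (P : Fin d → Fin n → ℝ) : Finset (Fin n) :=
  Finset.univ.filter fun i => ∃ k, P k i ≠ 0

/-- `f_α(P) = ∑_{i ∈ I} ∏_k (p_i^{(k)})^{α_k}` with `I` the common support. -/
def fMat {d n : ℕ} (α : Fin d → ℝ) (P : Fin d → Fin n → ℝ) : ℝ :=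
  ∑ i ∈ suppIdx P, ∏ k, P k i ^ α k

/-- The matrix `α`-divergence `D_α`. -/
def Dmat {d n : ℕ} (α : Fin d → ℝ) (P : Fin d → Fin n → ℝ) : ℝ :=
  (1 / ((⨆ k, α k) - 1)) * Real.log (∑ i ∈ suppIdx P, ∏ k, P k i ^ α k)

/-- The tropical matrix divergence `D^𝕋_β`. -/
def DmatT {d n : ℕ} (β : Fin d → ℝ) (P : Fin d → Fin n → ℝ) : ℝ :=
  (1 / (⨆ k, β k)) * Real.log (⨆ i ∈ suppIdx P, ∏ k, P k i ^ β k)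

/-- Membership in `A₊`: entries summing to `1`, all nonnegative. -/
def memAplus {d : ℕ} (α : Fin d → ℝ) : Prop := (∑ k, α k = 1) ∧ ∀ k, 0 ≤ α k

/-- Membership in `A₋`: entries summing to `1`, one entry `≥ 1`, the others `≤ 0`. -/
def memAminus {d : ℕ} (α : Fin d → ℝ) : Prop :=
  (∑ k, α k = 1) ∧ ∃ k, 1 ≤ α k ∧ ∀ l, l ≠ k → α l ≤ 0

/-- Membership in `B₋`: entries summing to `0`, one entry `≥ 0`, the others `≤ 0`. -/
def memBminus {d : ℕ} (β : Fin d → ℝ) : Prop :=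
  (∑ k, β k = 0) ∧ ∃ k, 0 ≤ β k ∧ ∀ l, l ≠ k → β l ≤ 0

/-- `α` is none of the standard basis vectors `e₁, …, e_d`. -/
def notBasis {d : ℕ} (α : Fin d → ℝ) : Prop := ∀ k, α ≠ Pi.single k 1

/-- ℓ¹-distance of two vectors, padding with zeros to a common length. -/
def l1PadDist {m n : ℕ} (p : Fin m → ℝ) (q : Fin n → ℝ) : ℝ :=
  ∑ i : Fin (max m n),
    |(if h : (i : ℕ) < m then p ⟨(i : ℕ), h⟩ else 0) -
      (if h : (i : ℕ) < n then q ⟨(i : ℕ), h⟩ else 0)|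

/-- Index type of the direct sum `⨁_{s=0}^{n-1} p^{⊗(n-1-s)} ⊗ q^{⊗s}`. -/
abbrev TrickIdx (m m' n : ℕ) : Type :=
  Σ s : Fin n, (Fin (n - 1 - (s : ℕ)) → Fin m) × (Fin (s : ℕ) → Fin m')

/-- The standard catalyst `(1/n) ⨁_{s=0}^{n-1} p^{⊗(n-1-s)} ⊗ q^{⊗s}`. -/
def trick {m m' : ℕ} (p : Fin m → ℝ) (q : Fin m' → ℝ) (n : ℕ) : TrickIdx m m' n → ℝ :=
  fun x => (1 / (n : ℝ)) * (kpow p (n - 1 - (x.1 : ℕ)) x.2.1 * kpow q (x.1 : ℕ) x.2.2)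

/-- A valid tuple: nonnegative entries and common support across the tuple. -/
def TupOK {d n : ℕ} (P : Fin d → Fin n → ℝ) : Prop :=
  (∀ k i, 0 ≤ P k i) ∧ ∀ k l i, P k i ≠ 0 ↔ P l i ≠ 0

/-- Matrix majorization of tuples: a single stochastic matrix carrying each column
of `P` to the corresponding column of `Q`. -/
def TupMaj {d m n : ℕ} (P : Fin d → Fin m → ℝ) (Q : Fin d → Fin n → ℝ) : Prop :=
  ∃ T : Fin n → Fin m → ℝ, IsStochastic T ∧ ∀ k, matVec T (P k) = Q k

/-!
Let `m` be the smallest positive entry of `p`, attained on the index set `B`, and let `A` be the set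
of indices with `m < p i`. Move the entries in `A` slightly up (resp. down) to rational values and
spread the remaining mass evenly over `B`; as `∑ i, p i` is rational, the result `q` is rational. If
the entries in `A` went up, mass has moved from the smallest positive entries to larger ones, so `q`
majorizes `p`; if they went down, `p` majorizes `q`, because for small perturbations the entries in
`A` still dominate those in `B`. The support never changes. Thus `p` is a limit of rational vectors
on either side of it in the preorder `≽₀,₁`, and `Λ p` bounds `Δ p` from both sides.
-/

open Filter Topology

section TopSum

variable {ι : Type*} [Fintype ι]

theorem sum_le_topSum (x : ι → ℝ) {s : Finset ι} {k : ℕ} (hs : s.card ≤ k) :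
    ∑ i ∈ s, x i ≤ topSum x k := by
  have hbdd : BddAbove (Set.range fun s : Finset ι ↦
      ⨆ _ : s ∈ {s : Finset ι | s.card ≤ k}, ∑ i ∈ s, x i) := (Set.finite_range _).bddAbove
  have hs' : s ∈ {s : Finset ι | s.card ≤ k} := hs
  exact (ciSup_pos hs').ge.trans (le_ciSup hbdd s)

theorem topSum_le {x : ι → ℝ} {k : ℕ} {b : ℝ}
    (h : ∀ s : Finset ι, s.card ≤ k → ∑ i ∈ s, x i ≤ b) : topSum x k ≤ b := by
  have hb : 0 ≤ b := by simpa using h ∅ (by simp)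
  exact Real.iSup_le (fun s ↦ Real.iSup_le (h s) hb) hb

end TopSum

section Threshold

theorem exists_card_eq_sum_le_of_threshold {ι M : Type*} [AddCommMonoid M] [PartialOrder M]
    [IsOrderedCancelAddMonoid M] {x : ι → M} {t : M} {A : Finset ι}
    (hle : ∀ i ∉ A, x i ≤ t) (hge : ∀ i ∈ A, t ≤ x i) (T : Finset ι) :
    ∃ T' : Finset ι, T'.card = T.card ∧ (T' ⊆ A ∨ A ⊆ T') ∧ ∑ i ∈ T, x i ≤ ∑ i ∈ T', x i := by
  classical
  -- Trade as many elements of `T \ A` as possible for elements of `A \ T`.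
  obtain ⟨T', hcard, hcomp, hlow, hupp⟩ : ∃ T' : Finset ι, T'.card = T.card ∧
      (T' ⊆ A ∨ A ⊆ T') ∧ T ∩ A ⊆ T' ∧ T' ⊆ T ∪ A := by
    rcases le_total T.card A.card with h | h
    · obtain ⟨T', hlow, hupp, hcard⟩ := Finset.exists_subsuperset_card_eq
        (Finset.inter_subset_right : T ∩ A ⊆ A) (Finset.card_le_card Finset.inter_subset_left) h
      exact ⟨T', hcard, .inl hupp, hlow, hupp.trans Finset.subset_union_right⟩
    · obtain ⟨T', hlow, hupp, hcard⟩ := Finset.exists_subsuperset_card_eq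
        (Finset.subset_union_right : A ⊆ T ∪ A) h (Finset.card_le_card Finset.subset_union_left)
      exact ⟨T', hcard, .inr hlow, Finset.inter_subset_right.trans hlow, hupp⟩
  refine ⟨T', hcard, hcomp, Finset.sum_sdiff_le_sum_sdiff.1 ?_⟩
  calc
    ∑ i ∈ T \ T', x i ≤ (T \ T').card • t :=
      Finset.sum_le_card_nsmul _ _ _ fun i hi ↦ hle i (by grind)
    _ = (T' \ T).card • t := by rw [Finset.card_sdiff_comm hcard.symm]
    _ ≤ ∑ i ∈ T' \ T, x i := Finset.card_nsmul_le_sum _ _ _ fun i hi ↦ hge i (by grind)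

theorem majorizes_of_threshold {ι : Type*} [Fintype ι] {x y : ι → ℝ} {t : ℝ} {A : Finset ι}
    (hsum : ∑ i, x i = ∑ i, y i) (hxy : ∀ i ∈ A, x i ≤ y i) (hyx : ∀ i ∉ A, y i ≤ x i)
    (hle : ∀ i ∉ A, x i ≤ t) (hge : ∀ i ∈ A, t ≤ x i) : Majorizes y x := by
  classical
  refine ⟨hsum.symm, fun k ↦ topSum_le fun T hT ↦ ?_⟩
  obtain ⟨T', hcard, hcomp, hTT'⟩ := exists_card_eq_sum_le_of_threshold hle hge T
  have hT'xy : ∑ i ∈ T', x i ≤ ∑ i ∈ T', y i := by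
    rcases hcomp with hsub | hsup
    · exact Finset.sum_le_sum fun i hi ↦ hxy i (hsub hi)
    · have hcompl : ∑ i ∈ T'ᶜ, y i ≤ ∑ i ∈ T'ᶜ, x i :=
        Finset.sum_le_sum fun i hi ↦ hyx i fun hiA ↦ Finset.mem_compl.1 hi (hsup hiA)
      linarith [Finset.sum_add_sum_compl T' x, Finset.sum_add_sum_compl T' y]
  exact (hTT'.trans hT'xy).trans (sum_le_topSum y (hcard.trans_le hT))

end Threshold

section Density

variable {α : Type*} [LinearOrder α] [DenselyOrdered α] [TopologicalSpace α] [OrderTopology α]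

theorem mem_closure_inter_Iic_of_dense {D : Set α} (hD : Dense D) (hbot : ∀ a, IsBot a → a ∈ D)
    (a : α) : a ∈ closure (D ∩ Set.Iic a) := by
  by_cases ha : IsBot a
  · exact subset_closure ⟨hbot a ha, Set.self_mem_Iic⟩
  · have hne : (Set.Iio a).Nonempty := by simpa [IsBot] using ha
    have ha' : a ∈ closure (Set.Iio a) := by rw [closure_Iio' hne]; exact Set.self_mem_Iic
    refine closure_minimal ?_ isClosed_closure ha'
    refine (hD.open_subset_closure_inter isOpen_Iio).trans (closure_mono ?_)
    exact fun b hb ↦ ⟨hb.2, le_of_lt hb.1⟩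

theorem frequently_pi_mem_and_le_of_dense {ι : Type*} {D : Set α} (hD : Dense D)
    (hbot : ∀ a, IsBot a → a ∈ D) (p : ι → α) : ∃ᶠ u in 𝓝 p, (∀ i, u i ∈ D) ∧ u ≤ p := by
  have hp : p ∈ closure (Set.univ.pi fun i ↦ D ∩ Set.Iic (p i)) := by
    rw [closure_pi_set]
    exact fun i _ ↦ mem_closure_inter_Iic_of_dense hD hbot (p i)
  exact (mem_closure_iff_frequently.1 hp).mono fun u hu ↦
    ⟨fun i ↦ (hu i trivial).1, fun i ↦ (hu i trivial).2⟩

theorem frequently_pi_mem_and_ge_of_dense {ι : Type*} {D : Set α} (hD : Dense D)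
    (htop : ∀ a, IsTop a → a ∈ D) (p : ι → α) : ∃ᶠ u in 𝓝 p, (∀ i, u i ∈ D) ∧ p ≤ u :=
  frequently_pi_mem_and_le_of_dense (α := αᵒᵈ) hD htop p

theorem dense_setOf_coe_mem_subfield (K : Subfield ℝ) : Dense {x : ℝ≥0 | (x : ℝ) ∈ K} := by
  refine dense_of_exists_between fun a b hab ↦ ?_
  obtain ⟨r, hr, har, hrb⟩ := (NNReal.lt_iff_exists_rat_btwn a b).1 hab
  refine ⟨Real.toNNReal r, ?_, har, hrb⟩
  simp [hr]

end Density

section LevelOff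

variable {ι : Type*} {A B : Finset ι} {s : ℝ≥0} {u v : ι → ℝ≥0}

/-- The value each entry in `B` must have for the entries in `A ∪ B` to sum to `s`, given those in
`A`. The subtraction is truncated, so this is `0` as soon as the entries in `A` exceed `s`. -/
def residualMean (A B : Finset ι) (s : ℝ≥0) (u : ι → ℝ≥0) : ℝ≥0 :=
  (s - ∑ j ∈ A, u j) / B.card

theorem residualMean_pos : 0 < residualMean A B s u ↔ ∑ j ∈ A, u j < s ∧ B.Nonempty := by
  simp only [residualMean, pos_iff_ne_zero, ne_eq, div_eq_zero_iff, not_or, tsub_eq_zero_iff_le,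
    not_le, Nat.cast_eq_zero, Finset.card_eq_zero, Finset.nonempty_iff_ne_empty]

theorem residualMean_anti (h : ∀ j ∈ A, u j ≤ v j) :
    residualMean A B s v ≤ residualMean A B s u := by
  unfold residualMean
  gcongr with j hj
  exact h j hj

theorem continuous_residualMean (A B : Finset ι) (s : ℝ≥0) : Continuous (residualMean A B s) := by
  unfold residualMean
  fun_prop

theorem coe_residualMean_mem {K : Subfield ℝ} (hs : (s : ℝ) ∈ K) (hu : ∀ j ∈ A, (u j : ℝ) ∈ K)
    (h : ∑ j ∈ A, u j ≤ s) : (residualMean A B s u : ℝ) ∈ K := by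
  rw [residualMean, NNReal.coe_div, NNReal.coe_sub h, NNReal.coe_sum]
  exact div_mem (sub_mem hs (sum_mem hu)) (natCast_mem K B.card)

variable [DecidableEq ι]

/-- The vector which agrees with `u` on `A`, is constant on `B`, vanishes elsewhere, and has total
mass `s` (when the entries of `u` in `A` leave some mass for `B`). -/
def levelOff (A B : Finset ι) (s : ℝ≥0) (u : ι → ℝ≥0) (i : ι) : ℝ≥0 :=
  if i ∈ A then u i else if i ∈ B then residualMean A B s u else 0

theorem levelOff_of_mem {i : ι} (hi : i ∈ A) : levelOff A B s u i = u i :=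
  if_pos hi

theorem levelOff_of_notMem {i : ι} (hi : i ∉ A) :
    levelOff A B s u i = if i ∈ B then residualMean A B s u else 0 :=
  if_neg hi

theorem continuous_levelOff (A B : Finset ι) (s : ℝ≥0) : Continuous (levelOff A B s) := by
  refine continuous_pi fun i ↦ ?_
  have := continuous_residualMean A B s
  unfold levelOff
  split_ifs <;> fun_prop

theorem coe_levelOff_mem {K : Subfield ℝ} (hs : (s : ℝ) ∈ K) (hu : ∀ j ∈ A, (u j : ℝ) ∈ K)
    (h : ∑ j ∈ A, u j ≤ s) (i : ι) : (levelOff A B s u i : ℝ) ∈ K := by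
  unfold levelOff
  split_ifs with hi
  · exact hu i hi
  · exact coe_residualMean_mem hs hu h
  · exact zero_mem K

theorem levelOff_ne_zero_iff (hpos : 0 < residualMean A B s u) (hu : ∀ j ∈ A, 0 < u j) (i : ι) :
    levelOff A B s u i ≠ 0 ↔ i ∈ A ∪ B := by
  unfold levelOff
  split_ifs with hA hB
  · simp [hA, (hu i hA).ne']
  · simp [hB, hpos.ne']
  · simp [hA, hB]

variable [Fintype ι]

theorem sum_levelOff (hAB : Disjoint A B) (hpos : 0 < residualMean A B s u) :
    ∑ i, levelOff A B s u i = s := by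
  obtain ⟨hlt, hB⟩ := residualMean_pos.1 hpos
  have hcard : (B.card : ℝ≥0) ≠ 0 := by exact_mod_cast hB.card_pos.ne'
  have hsplit (i : ι) : levelOff A B s u i =
      (if i ∈ A then u i else 0) + if i ∈ B then residualMean A B s u else 0 := by
    by_cases hA : i ∈ A
    · simp [levelOff, hA, Finset.disjoint_left.1 hAB hA]
    · simp [levelOff, hA]
  calc
    ∑ i, levelOff A B s u i = ∑ i ∈ A, u i + B.card * residualMean A B s u := by
      simp [hsplit, Finset.sum_add_distrib]
    _ = s := by rw [residualMean, mul_div_cancel₀ _ hcard, add_tsub_cancel_of_le hlt.le]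

theorem majMod_levelOff (hAB : Disjoint A B) (huv : ∀ j ∈ A, u j ≤ v j)
    (hu : ∀ j ∈ A, residualMean A B s u ≤ u j) (hv : 0 < residualMean A B s v) :
    MajMod (fun i ↦ (levelOff A B s v i : ℝ)) (fun i ↦ (levelOff A B s u i : ℝ)) := by
  have hanti : residualMean A B s v ≤ residualMean A B s u := residualMean_anti huv
  have hpos : 0 < residualMean A B s u := hv.trans_le hanti
  have hupos : ∀ j ∈ A, 0 < u j := fun j hj ↦ hpos.trans_le (hu j hj)
  refine ⟨majorizes_of_threshold (t := residualMean A B s u) (A := A) ?_ ?_ ?_ ?_ ?_, ?_⟩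
  · exact_mod_cast (sum_levelOff hAB hpos).trans (sum_levelOff hAB hv).symm
  · intro i hi
    simpa only [levelOff_of_mem hi] using NNReal.coe_le_coe.2 (huv i hi)
  · intro i hi
    simp only [levelOff_of_notMem hi, NNReal.coe_le_coe]
    split_ifs
    exacts [hanti, le_rfl]
  · intro i hi
    simp only [levelOff_of_notMem hi, NNReal.coe_le_coe]
    split_ifs
    exacts [le_rfl, zero_le]
  · intro i hi
    simpa only [levelOff_of_mem hi] using NNReal.coe_le_coe.2 (hu i hi)
  · simp only [supp0, NNReal.coe_ne_zero, levelOff_ne_zero_iff hpos hupos,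
      levelOff_ne_zero_iff hv fun j hj ↦ (hupos j hj).trans_le (huv j hj)]

theorem residualMean_sum_eq {p : ι → ℝ≥0} {m : ℝ≥0} (hAB : Disjoint A B) (hB : B.Nonempty)
    (hm : ∀ i ∈ B, p i = m) (hzero : ∀ i ∉ A ∪ B, p i = 0) :
    residualMean A B (∑ i, p i) p = m := by
  have hcard : (B.card : ℝ≥0) ≠ 0 := by exact_mod_cast hB.card_pos.ne'
  have hsum : ∑ i, p i = ∑ i ∈ A, p i + B.card * m := by
    calc
      ∑ i, p i = ∑ i ∈ A ∪ B, p i :=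
        (Finset.sum_subset (Finset.subset_univ _) fun i _ ↦ hzero i).symm
      _ = ∑ i ∈ A, p i + ∑ i ∈ B, p i := Finset.sum_union hAB
      _ = ∑ i ∈ A, p i + B.card * m := by
        rw [Finset.sum_congr rfl hm, Finset.sum_const, nsmul_eq_mul]
  rw [residualMean, hsum, add_tsub_cancel_left, mul_div_cancel_left₀ _ hcard]

theorem exists_levelOff_eq_self {p : ι → ℝ≥0} (hp : p ≠ 0) :
    ∃ A B : Finset ι, Disjoint A B ∧ levelOff A B (∑ i, p i) p = p ∧
      0 < residualMean A B (∑ i, p i) p ∧ ∀ j ∈ A, residualMean A B (∑ i, p i) p < p j := by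
  obtain ⟨i₁, hi₁⟩ := Function.ne_iff.1 hp
  obtain ⟨i₀, hi₀, hmin⟩ := (Finset.univ.filter (p · ≠ 0)).exists_min_image p ⟨i₁, by simpa⟩
  simp only [Finset.mem_filter_univ] at hi₀ hmin
  let A : Finset ι := {i | p i₀ < p i}
  let B : Finset ι := {i | p i = p i₀}
  have hA (i : ι) : i ∈ A ↔ p i₀ < p i := Finset.mem_filter_univ i
  have hB (i : ι) : i ∈ B ↔ p i = p i₀ := Finset.mem_filter_univ i
  have hAB : Disjoint A B := Finset.disjoint_filter.2 fun i _ hlt heq ↦ hlt.ne' heq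
  have hzero (i : ι) (hi : i ∉ A ∪ B) : p i = 0 := by
    by_contra hpi
    rw [Finset.mem_union, hA, hB, ← le_iff_lt_or_eq'] at hi
    exact hi (hmin i hpi)
  have hmean : residualMean A B (∑ i, p i) p = p i₀ :=
    residualMean_sum_eq hAB ⟨i₀, (hB i₀).2 rfl⟩ (fun i hi ↦ (hB i).1 hi) hzero
  refine ⟨A, B, hAB, funext fun i ↦ ?_, ?_, fun j hj ↦ ?_⟩
  · unfold levelOff
    split_ifs with hiA hiB
    · rfl
    · rw [hmean, (hB i).1 hiB]
    · exact (hzero i (by simp [hiA, hiB])).symm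
  · exact hmean ▸ pos_iff_ne_zero.2 hi₀
  · exact hmean ▸ (hA j).1 hj

end LevelOff

section Approximation

variable {ι : Type*} [Fintype ι] {K : Subfield ℝ} {p : ι → ℝ≥0}

theorem mem_closure_setOf_majMod_left (hp : p ≠ 0) (hs : ((∑ i, p i : ℝ≥0) : ℝ) ∈ K) :
    p ∈ closure {q : ι → ℝ≥0 | (∀ i, (q i : ℝ) ∈ K) ∧
      MajMod (fun i ↦ (q i : ℝ)) (fun i ↦ (p i : ℝ))} := by
  classical
  obtain ⟨A, B, hAB, hself, hpos, hlt⟩ := exists_levelOff_eq_self hp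
  have hcont : Tendsto (levelOff A B (∑ i, p i)) (𝓝 p) (𝓝 p) := by
    simpa only [hself] using (continuous_levelOff A B (∑ i, p i)).tendsto p
  have hpos' : ∀ᶠ v in 𝓝 p, 0 < residualMean A B (∑ i, p i) v :=
    (continuous_residualMean A B _).continuousAt.eventually_const_lt hpos
  have hfreq := frequently_pi_mem_and_ge_of_dense (dense_setOf_coe_mem_subfield K)
    (fun a ha ↦ (not_isTop a ha).elim) p
  refine mem_closure_iff_frequently.2 (hcont.frequently ((hfreq.and_eventually hpos').mono ?_))
  rintro v ⟨⟨hvK, hpv⟩, hv⟩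
  refine ⟨coe_levelOff_mem hs (fun j _ ↦ hvK j) (residualMean_pos.1 hv).1.le, ?_⟩
  simpa only [hself] using majMod_levelOff hAB (fun j _ ↦ hpv j) (fun j hj ↦ (hlt j hj).le) hv

theorem mem_closure_setOf_majMod_right (hp : p ≠ 0) (hs : ((∑ i, p i : ℝ≥0) : ℝ) ∈ K) :
    p ∈ closure {q : ι → ℝ≥0 | (∀ i, (q i : ℝ) ∈ K) ∧
      MajMod (fun i ↦ (p i : ℝ)) (fun i ↦ (q i : ℝ))} := by
  classical
  obtain ⟨A, B, hAB, hself, hpos, hlt⟩ := exists_levelOff_eq_self hp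
  have hcont : Tendsto (levelOff A B (∑ i, p i)) (𝓝 p) (𝓝 p) := by
    simpa only [hself] using (continuous_levelOff A B (∑ i, p i)).tendsto p
  have hlt' : ∀ᶠ u in 𝓝 p, ∀ j ∈ A, residualMean A B (∑ i, p i) u < u j :=
    (Finset.eventually_all A).2 fun j hj ↦
      (continuous_residualMean A B _).continuousAt.eventually_lt
        (continuous_apply j).continuousAt (hlt j hj)
  have hfreq := frequently_pi_mem_and_le_of_dense (dense_setOf_coe_mem_subfield K)
    (fun a ha ↦ by simp [isBot_iff_eq_bot.1 ha]) p
  refine mem_closure_iff_frequently.2 (hcont.frequently ((hfreq.and_eventually hlt').mono ?_))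
  rintro u ⟨⟨huK, hup⟩, hu⟩
  have hsum : ∑ j ∈ A, u j ≤ ∑ i, p i :=
    (Finset.sum_le_sum fun j _ ↦ hup j).trans (residualMean_pos.1 hpos).1.le
  refine ⟨coe_levelOff_mem hs (fun j _ ↦ huK j) hsum, ?_⟩
  simpa only [hself] using majMod_levelOff hAB (fun j _ ↦ hup j) (fun j hj ↦ (hu j hj).le) hpos

theorem monotone_functional_rational_approximation_general {α : Type*} [TopologicalSpace α]
    [PartialOrder α] [OrderClosedTopology α] {Δ Λ : (ι → ℝ≥0) → α}
    (hmono : ∀ p q : ι → ℝ≥0,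
      MajMod (fun i ↦ (p i : ℝ)) (fun i ↦ (q i : ℝ)) → Δ p ≤ Δ q)
    (hΛ : ContinuousAt Λ p) (hK : ∀ q : ι → ℝ≥0, (∀ i, (q i : ℝ) ∈ K) → Δ q = Λ q)
    (hs : ((∑ i, p i : ℝ≥0) : ℝ) ∈ K) : Δ p = Λ p := by
  rcases eq_or_ne p 0 with rfl | hp
  · exact hK 0 fun _ ↦ zero_mem K
  apply le_antisymm
  · have hfreq := mem_closure_iff_frequently.1 (mem_closure_setOf_majMod_right hp hs)
    refine ge_of_tendsto_of_frequently hΛ (hfreq.mono ?_)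
    rintro q ⟨hqK, hpq⟩
    exact hK q hqK ▸ hmono p q hpq
  · have hfreq := mem_closure_iff_frequently.1 (mem_closure_setOf_majMod_left hp hs)
    refine le_of_tendsto_of_frequently hΛ (hfreq.mono ?_)
    rintro q ⟨hqK, hqp⟩
    exact hK q hqK ▸ hmono q p hqp

end Approximation

/-- **Approximation lemma for monotone functionals.**  If `Δ` on nonnegative
vectors of fixed length `n` is antitone for the modified majorization preorder
`≽₀,₁` and agrees with a continuous function `Λ` on all vectors with rational
entries, then it agrees with `Λ` on every vector whose total sum is
rational. -/
theorem monotone_functional_rational_approximation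
    {n : ℕ} (hn : 1 ≤ n) (Δ Λ : (Fin n → ℝ≥0) → ℝ)
    (hmono : ∀ p q : Fin n → ℝ≥0,
      MajMod (fun i => (p i : ℝ)) (fun i => (q i : ℝ)) → Δ p ≤ Δ q)
    (hΛ : Continuous Λ)
    (hrat : ∀ p : Fin n → ℝ≥0, (∀ i, ∃ a : ℚ, (p i : ℝ) = a) → Δ p = Λ p) :
    ∀ p : Fin n → ℝ≥0, (∃ a : ℚ, ((∑ i, p i : ℝ≥0) : ℝ) = a) → Δ p = Λ p := by
  rintro p ⟨a, ha⟩
  exact monotone_functional_rational_approximation_general (K := (Rat.castHom ℝ).fieldRange) hmono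
    hΛ.continuousAt (fun q hq ↦ hrat q fun i ↦ (hq i).imp fun _ ↦ Eq.symm) ⟨a, ha.symm⟩
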